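/- Let y : ℍ → ℂ be three times differentiable and satisfy Chazy's equation y''' = 2 y y'' − 3(y')² on the upper half plane ℍ, and let a, b, c, d be real numbers with ad − bc = 1. Then the function ỹ(t) = (ct+d)⁻² y((at+b)/(ct+d)) − 6c/(ct+d) also satisfies Chazy's equation on ℍ. -/

import Mathlib

/-!
Set `Q = y' - y² / 6` and `R = Q' - 2 y Q / 3`. Chazy's equation for `y` is then the single relation
`R' = y R - 4 Q²`, so it is equivalent to a first-order system for `(y, Q, R)`. Up to scaling, this
is Ramanujan's system for the Eisenstein series `(E₂, E₄, E₆)`, and it has the same invariance: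
`y` transforms as a quasimodular form of weight 2, while `Q` and `R` transform as modular forms of
weights 4 and 6. The reason is that the Serre derivative `f' - (k / 3) y f` is covariant when
`f` has weight `2 k`.
-/

open Set
open scoped MatrixGroups

namespace Chazy

variable {𝕜 : Type*} [NontriviallyNormedField 𝕜]

/-- The three times differentiable solutions of Chazy's equation on a set. -/
structure IsSolutionOn (y : 𝕜 → 𝕜) (U : Set 𝕜) : Prop where
  differentiableAt : ∀ t ∈ U, DifferentiableAt 𝕜 y t
  differentiableAt_deriv : ∀ t ∈ U, DifferentiableAt 𝕜 (deriv y) t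
  differentiableAt_deriv_deriv : ∀ t ∈ U, DifferentiableAt 𝕜 (deriv (deriv y)) t
  deriv_deriv_deriv : ∀ t ∈ U,
    deriv (deriv (deriv y)) t = 2 * y t * deriv (deriv y) t - 3 * deriv y t ^ 2

/-- Ramanujan's differential system, in the scaling where `y = iπ E₂`, `Q = (π² / 6) E₄` and
`R = -(iπ³ / 9) E₆` solve it on the upper half plane. -/
structure IsRamanujanSystemOn (y Q R : 𝕜 → 𝕜) (U : Set 𝕜) : Prop where
  hasDerivAt_fst : ∀ t ∈ U, HasDerivAt y (y t ^ 2 / 6 + Q t) t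
  hasDerivAt_snd : ∀ t ∈ U, HasDerivAt Q (2 / 3 * y t * Q t + R t) t
  hasDerivAt_thd : ∀ t ∈ U, HasDerivAt R (y t * R t - 4 * Q t ^ 2) t

section System

variable {U : Set 𝕜}

theorem hasDerivAt_deriv_of_isOpen {f g : 𝕜 → 𝕜} {g' t : 𝕜} (hU : IsOpen U)
    (hf : ∀ s ∈ U, HasDerivAt f (g s) s) (ht : t ∈ U) (hg : HasDerivAt g g' t) :
    HasDerivAt (deriv f) g' t :=
  hg.congr_of_eventuallyEq <|
    Filter.eventuallyEq_of_mem (hU.mem_nhds ht) fun s hs ↦ (hf s hs).deriv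

variable [CharZero 𝕜] {y Q R : 𝕜 → 𝕜}

theorem IsSolutionOn.isRamanujanSystemOn (hy : IsSolutionOn y U) :
    IsRamanujanSystemOn y (fun t ↦ deriv y t - y t ^ 2 / 6)
      (fun t ↦ deriv (deriv y) t - y t * deriv y t + y t ^ 3 / 9) U where
  hasDerivAt_fst t ht := by
    simpa only [add_sub_cancel] using (hy.differentiableAt t ht).hasDerivAt
  hasDerivAt_snd t ht := by
    have h₀ := (hy.differentiableAt t ht).hasDerivAt
    have h₁ := (hy.differentiableAt_deriv t ht).hasDerivAt
    refine (h₁.fun_sub ((h₀.fun_pow 2).div_const 6)).congr_deriv ?_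
    field
  hasDerivAt_thd t ht := by
    have h₀ := (hy.differentiableAt t ht).hasDerivAt
    have h₁ := (hy.differentiableAt_deriv t ht).hasDerivAt
    have h₂ := (hy.differentiableAt_deriv_deriv t ht).hasDerivAt
    refine ((h₂.fun_sub (h₀.fun_mul h₁)).fun_add ((h₀.fun_pow 3).div_const 9)).congr_deriv ?_
    rw [hy.deriv_deriv_deriv t ht]
    field

theorem IsRamanujanSystemOn.isSolutionOn (h : IsRamanujanSystemOn y Q R U) (hU : IsOpen U) :
    IsSolutionOn y U := by
  have hy := h.hasDerivAt_fst
  have hy' (t) (ht : t ∈ U) :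
      HasDerivAt (deriv y) (y t ^ 3 / 18 + y t * Q t + R t) t := by
    refine hasDerivAt_deriv_of_isOpen hU hy ht
      (((((hy t ht).fun_pow 2).div_const 6).fun_add (h.hasDerivAt_snd t ht)).congr_deriv ?_)
    field
  have hy'' (t) (ht : t ∈ U) : HasDerivAt (deriv (deriv y))
      (2 * y t * (y t ^ 3 / 18 + y t * Q t + R t) - 3 * (y t ^ 2 / 6 + Q t) ^ 2) t := by
    refine hasDerivAt_deriv_of_isOpen hU hy' ht
      (((((hy t ht).fun_pow 3).div_const 18).fun_add
        ((hy t ht).fun_mul (h.hasDerivAt_snd t ht))).fun_add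
          (h.hasDerivAt_thd t ht) |>.congr_deriv ?_)
    field
  exact
    { differentiableAt t ht := (hy t ht).differentiableAt
      differentiableAt_deriv t ht := (hy' t ht).differentiableAt
      differentiableAt_deriv_deriv t ht := (hy'' t ht).differentiableAt
      deriv_deriv_deriv t ht := by
        rw [(hy'' t ht).deriv, (hy' t ht).deriv, (hy t ht).deriv] }

end System

/-- The Möbius map `t ↦ (at + b) / (ct + d)`. -/
def moebius (a b c d t : 𝕜) : 𝕜 := (a * t + b) / (c * t + d)

/-- The derivative `(ad - bc) / (ct + d)²` of the Möbius map. -/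
def moebiusDeriv (a b c d t : 𝕜) : 𝕜 := (a * d - b * c) / (c * t + d) ^ 2

/-- The slash action of weight `2 k`, normalised so that the factor is the `k`-th power of the
derivative of the Möbius map. -/
def slash (a b c d : 𝕜) (k : ℕ) (f : 𝕜 → 𝕜) (t : 𝕜) : 𝕜 :=
  moebiusDeriv a b c d t ^ k * f (moebius a b c d t)

/-- The quasimodular action of weight 2 under which `iπ E₂` is invariant for `SL(2, ℤ)`. -/
def transform (a b c d : 𝕜) (y : 𝕜 → 𝕜) (t : 𝕜) : 𝕜 :=
  slash a b c d 1 y t - 6 * c / (c * t + d)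

section Moebius

variable {a b c d t : 𝕜}

theorem transform_apply_of_det_eq_one (hdet : a * d - b * c = 1) (y : 𝕜 → 𝕜) (t : 𝕜) :
    transform a b c d y t =
      (c * t + d)⁻¹ ^ 2 * y ((a * t + b) / (c * t + d)) - 6 * c / (c * t + d) := by
  simp [transform, slash, moebiusDeriv, moebius, hdet]

theorem hasDerivAt_linear (a b t : 𝕜) : HasDerivAt (fun s ↦ a * s + b) a t := by
  simpa using ((hasDerivAt_id t).const_mul a).add_const b

theorem hasDerivAt_moebius (ht : c * t + d ≠ 0) :
    HasDerivAt (moebius a b c d) (moebiusDeriv a b c d t) t := by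
  refine ((hasDerivAt_linear a b t).fun_div (hasDerivAt_linear c d t) ht).congr_deriv ?_
  rw [moebiusDeriv]
  ring

theorem hasDerivAt_moebiusDeriv (ht : c * t + d ≠ 0) :
    HasDerivAt (moebiusDeriv a b c d) (-2 * c / (c * t + d) * moebiusDeriv a b c d t) t := by
  refine ((hasDerivAt_const t (a * d - b * c)).fun_div ((hasDerivAt_linear c d t).fun_pow 2)
    (pow_ne_zero 2 ht)).congr_deriv ?_
  rw [moebiusDeriv]
  field

theorem hasDerivAt_slash {f : 𝕜 → 𝕜} {f' : 𝕜} (k : ℕ) (ht : c * t + d ≠ 0)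
    (hf : HasDerivAt f f' (moebius a b c d t)) :
    HasDerivAt (slash a b c d k f)
      (-2 * k * c / (c * t + d) * slash a b c d k f t
        + moebiusDeriv a b c d t ^ (k + 1) * f') t := by
  refine (((hasDerivAt_moebiusDeriv ht).fun_pow k).fun_mul
    (hf.comp t (hasDerivAt_moebius ht))).congr_deriv ?_
  rw [slash, Function.comp_apply]
  cases k with
  | zero => simp only [Nat.cast_zero]; ring
  | succ k => simp only [Nat.add_sub_cancel]; ring

variable [CharZero 𝕜] {y : 𝕜 → 𝕜}

/-- Here `g` plays the role of the Serre derivative `f' - (k / 3) y f`. -/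
theorem hasDerivAt_slash_of_serre {f : 𝕜 → 𝕜} (g : 𝕜 → 𝕜) (k : ℕ) (ht : c * t + d ≠ 0)
    (hf : HasDerivAt f (k / 3 * y (moebius a b c d t) * f (moebius a b c d t)
      + g (moebius a b c d t)) (moebius a b c d t)) :
    HasDerivAt (slash a b c d k f)
      (k / 3 * transform a b c d y t * slash a b c d k f t + slash a b c d (k + 1) g t) t := by
  refine (hasDerivAt_slash k ht hf).congr_deriv ?_
  simp only [transform, slash]
  field

theorem hasDerivAt_transform (Q : 𝕜 → 𝕜) (ht : c * t + d ≠ 0)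
    (hy : HasDerivAt y (y (moebius a b c d t) ^ 2 / 6 + Q (moebius a b c d t))
      (moebius a b c d t)) :
    HasDerivAt (transform a b c d y)
      (transform a b c d y t ^ 2 / 6 + slash a b c d 2 Q t) t := by
  refine ((hasDerivAt_slash 1 ht hy).fun_sub
    ((hasDerivAt_const t (6 * c)).fun_div (hasDerivAt_linear c d t) ht)).congr_deriv ?_
  simp only [transform, slash]
  field

theorem IsRamanujanSystemOn.transform {Q R : 𝕜 → 𝕜} {U V : Set 𝕜}
    (h : IsRamanujanSystemOn y Q R V) (hUV : MapsTo (moebius a b c d) U V)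
    (hden : ∀ t ∈ U, c * t + d ≠ 0) :
    IsRamanujanSystemOn (transform a b c d y) (slash a b c d 2 Q) (slash a b c d 3 R) U where
  hasDerivAt_fst t ht := hasDerivAt_transform Q (hden t ht) (h.hasDerivAt_fst _ (hUV ht))
  hasDerivAt_snd t ht := hasDerivAt_slash_of_serre R 2 (hden t ht) (h.hasDerivAt_snd _ (hUV ht))
  hasDerivAt_thd t ht := by
    have hR := h.hasDerivAt_thd _ (hUV ht)
    refine (hasDerivAt_slash_of_serre (y := y) (fun s ↦ -4 * Q s ^ 2) 3 (hden t ht)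
      (hR.congr_deriv ?_)).congr_deriv ?_
    · field
    · simp only [slash]
      field

end Moebius

section RealMoebius

variable {a b c d : ℝ}

theorem denom_ne_zero_of_im_pos {t : ℂ} (hdet : a * d - b * c ≠ 0) (ht : 0 < t.im) :
    (c : ℂ) * t + d ≠ 0 :=
  UpperHalfPlane.denom_ne_zero_of_im
    (.mkOfDetNeZero !![a, b; c, d] (by rwa [Matrix.det_fin_two_of])) ht.ne'

theorem mapsTo_moebius_upperHalfPlaneSet (hdet : 0 < a * d - b * c) :
    MapsTo (moebius (a : ℂ) b c d) UpperHalfPlane.upperHalfPlaneSet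
      UpperHalfPlane.upperHalfPlaneSet := by
  intro t ht
  let g : GL (Fin 2) ℝ := .mkOfDetNeZero !![a, b; c, d] (by simpa using hdet.ne')
  have hg : 0 < g.det.val := by simpa [g] using hdet
  have hcoe := UpperHalfPlane.coe_smul_of_det_pos hg ⟨t, ht⟩
  exact (g • (⟨t, ht⟩ : UpperHalfPlane)).im_pos.trans_eq (congrArg Complex.im hcoe)

end RealMoebius

end Chazy

open Chazy

theorem chazy_sl2_invariance_general {𝕜 : Type*} [NontriviallyNormedField 𝕜] [CharZero 𝕜]
    {y : 𝕜 → 𝕜} {U V : Set 𝕜} {a b c d : 𝕜} (hy : IsSolutionOn y V) (hU : IsOpen U)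
    (hUV : MapsTo (moebius a b c d) U V) (hden : ∀ t ∈ U, c * t + d ≠ 0) :
    IsSolutionOn (transform a b c d y) U :=
  (hy.isRamanujanSystemOn.transform hUV hden).isSolutionOn hU

/-- **SL(2,ℝ)-invariance of Chazy's equation.**
If `y` is three times differentiable on the upper half plane `ℍ = {t | 0 < im t}` and
satisfies Chazy's equation `y''' = 2 y y'' − 3 (y')²` there, and `a, b, c, d ∈ ℝ` with
`ad − bc = 1`, then `ỹ(t) = (ct+d)⁻² y((at+b)/(ct+d)) − 6c/(ct+d)` also satisfies
Chazy's equation on `ℍ`. -/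
theorem chazy_sl2_invariance
    (y : ℂ → ℂ)
    (hy : ∀ t : ℂ, 0 < t.im → DifferentiableAt ℂ y t)
    (hy' : ∀ t : ℂ, 0 < t.im → DifferentiableAt ℂ (deriv y) t)
    (hy'' : ∀ t : ℂ, 0 < t.im → DifferentiableAt ℂ (deriv (deriv y)) t)
    (hchazy : ∀ t : ℂ, 0 < t.im →
      deriv (deriv (deriv y)) t = 2 * y t * deriv (deriv y) t - 3 * (deriv y t) ^ 2)
    (a b c d : ℝ) (habcd : a * d - b * c = 1)
    (yt : ℂ → ℂ)
    (hyt : ∀ t : ℂ, yt t = ((c : ℂ) * t + d)⁻¹ ^ 2 *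
      y (((a : ℂ) * t + b) / ((c : ℂ) * t + d)) - 6 * (c : ℂ) / ((c : ℂ) * t + d)) :
    ∀ t : ℂ, 0 < t.im →
      deriv (deriv (deriv yt)) t = 2 * yt t * deriv (deriv yt) t - 3 * (deriv yt t) ^ 2 := by
  obtain rfl : yt = transform (a : ℂ) b c d y :=
    funext fun t ↦ (hyt t).trans (transform_apply_of_det_eq_one (mod_cast habcd) y t).symm
  have hdet : 0 < a * d - b * c := habcd ▸ one_pos
  exact (chazy_sl2_invariance_general ⟨hy, hy', hy'', hchazy⟩
    UpperHalfPlane.isOpen_upperHalfPlaneSet (mapsTo_moebius_upperHalfPlaneSet hdet)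
    fun _ ↦ denom_ne_zero_of_im_pos hdet.ne').deriv_deriv_deriv
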